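/- Let p ∈ [1, 2] and let Q = (q_{ij}) be a symmetric n×n real matrix. Then for every v ∈ ℝ^n, v⊤ Q v^{⟨p−1⟩} ≥ Σ_{i=1}^{n} |v^i|^p (q_{ii} − Σ_{j≠i} |q_{ij}|). In particular, if Q is diagonally dominant with non-negative diagonal (q_{ii} − Σ_{j≠i}|q_{ij}| > 0 for all i), then Q is p-positive definite. -/

import Mathlib

open Matrix Finset

/-- The signed entrywise power `v^{⟨q⟩}`: `(v^{⟨q⟩})_i = sgn(v_i)|v_i|^q`. -/
noncomputable def signedPow {n : ℕ} (q : ℝ) (v : Fin n → ℝ) : Fin n → ℝ :=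
  fun i => Real.sign (v i) * |v i| ^ q

/-- The `p`-norm `‖v‖_p = (Σ_i |v_i|^p)^{1/p}` on `ℝ^n`. -/
noncomputable def pNorm {n : ℕ} (p : ℝ) (v : Fin n → ℝ) : ℝ :=
  (∑ i, |v i| ^ p) ^ (1 / p)

/-- `Q` is `p`-positive definite: `v⊤ Q v^{⟨p−1⟩} > 0` for every `v` with `‖v‖_p = 1`. -/
def PPosDef {n : ℕ} (p : ℝ) (Q : Matrix (Fin n) (Fin n) ℝ) : Prop :=
  ∀ v : Fin n → ℝ, pNorm p v = 1 → 0 < v ⬝ᵥ Q.mulVec (signedPow (p - 1) v)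

/-!
Expand `v⊤ Q v^{⟨p-1⟩}` entrywise. The diagonal terms are exactly `q_{ii} |v_i|^p`, and Young's
inequality `|v_i| |v_j|^{p-1} ≤ |v_i|^p / p + (1 - 1/p) |v_j|^p` bounds the off-diagonal ones.
Summing, row `i` contributes its deleted absolute sum with weight `1/p` and column `i` with weight
`1 - 1/p`; for a symmetric matrix the two sums coincide and the weights add up to `1`.
-/

section SignedPower

lemma self_mul_real_sign (x : ℝ) : x * Real.sign x = |x| := by
  obtain hx | rfl | hx := lt_trichotomy x 0
  · rw [Real.sign_of_neg hx, abs_of_neg hx, mul_neg_one]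
  · rw [zero_mul, abs_zero]
  · rw [Real.sign_of_pos hx, abs_of_pos hx, mul_one]

lemma abs_real_sign_le_one (x : ℝ) : |Real.sign x| ≤ 1 := by
  obtain hx | hx | hx := Real.sign_apply_eq x <;> simp [hx]

lemma self_mul_sign_mul_abs_rpow_sub_one {p : ℝ} (hp : p ≠ 0) (x : ℝ) :
    x * (Real.sign x * |x| ^ (p - 1)) = |x| ^ p := by
  rw [← mul_assoc, self_mul_real_sign,
    ← Real.rpow_one_add' (abs_nonneg x) (by rwa [add_sub_cancel]), add_sub_cancel]

lemma abs_sign_mul_abs_rpow_le (q x : ℝ) : |Real.sign x * |x| ^ q| ≤ |x| ^ q := by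
  have hpow : 0 ≤ |x| ^ q := Real.rpow_nonneg (abs_nonneg x) q
  rw [abs_mul, abs_of_nonneg hpow]
  exact mul_le_of_le_one_left hpow (abs_real_sign_le_one x)

end SignedPower

section Young

variable {p : ℝ}

lemma mul_rpow_sub_one_le_young (hp : 1 ≤ p) {a b : ℝ} (ha : 0 ≤ a) (hb : 0 ≤ b) :
    a * b ^ (p - 1) ≤ p⁻¹ * a ^ p + (1 - p⁻¹) * b ^ p := by
  have hp0 : p ≠ 0 := by positivity
  have hexp : p * (1 - p⁻¹) = p - 1 := by rw [mul_sub, mul_one, mul_inv_cancel₀ hp0]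
  calc a * b ^ (p - 1) = (a ^ p) ^ p⁻¹ * (b ^ p) ^ (1 - p⁻¹) := by
        rw [Real.rpow_rpow_inv ha hp0, ← Real.rpow_mul hb, hexp]
    _ ≤ p⁻¹ * a ^ p + (1 - p⁻¹) * b ^ p :=
        Real.geom_mean_le_arith_mean2_weighted (by positivity)
          (sub_nonneg.2 (inv_le_one_of_one_le₀ hp)) (by positivity) (by positivity)
          (add_sub_cancel _ _)

lemma neg_abs_mul_young_le_mul_sign_mul_rpow (hp : 1 ≤ p) (c x y : ℝ) :
    -(|c| * (p⁻¹ * |x| ^ p + (1 - p⁻¹) * |y| ^ p)) ≤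
      x * (c * (Real.sign y * |y| ^ (p - 1))) := by
  refine neg_le_of_abs_le ?_
  calc |x * (c * (Real.sign y * |y| ^ (p - 1)))|
      = |c| * (|x| * |Real.sign y * |y| ^ (p - 1)|) := by rw [abs_mul, abs_mul c, mul_left_comm]
    _ ≤ |c| * (|x| * |y| ^ (p - 1)) := by gcongr; exact abs_sign_mul_abs_rpow_le _ y
    _ ≤ |c| * (p⁻¹ * |x| ^ p + (1 - p⁻¹) * |y| ^ p) := by
        gcongr
        exact mul_rpow_sub_one_le_young hp (abs_nonneg x) (abs_nonneg y)

end Young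

section DeletedRowSum

variable {ι : Type*} [Fintype ι] [DecidableEq ι]

/-- The deleted absolute row sum `∑_{j ≠ i} |q_{ij}|`, the radius of the `i`-th Gershgorin disc.
Deleted column sums are the deleted row sums of the transpose. -/
def deletedRowSum (Q : Matrix ι ι ℝ) (i : ι) : ℝ :=
  ∑ j ∈ univ.erase i, |Q i j|

lemma sum_offDiag_abs_mul_add (Q : Matrix ι ι ℝ) (s t : ℝ) (a : ι → ℝ) :
    ∑ i, ∑ j ∈ univ.erase i, |Q i j| * (s * a i + t * a j) =
      ∑ i, a i * (s * deletedRowSum Q i + t * deletedRowSum Qᵀ i) := by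
  have hcol : ∑ i, ∑ j ∈ univ.erase i, |Q i j| * (t * a j) =
      ∑ i, ∑ j ∈ univ.erase i, |Qᵀ i j| * (t * a i) :=
    Finset.sum_comm' fun i j => by simp [eq_comm]
  simp only [mul_add, Finset.sum_add_distrib, hcol, ← Finset.sum_mul, deletedRowSum]
  congr 1 <;> exact Finset.sum_congr rfl fun i _ => by ring

end DeletedRowSum

section PPosDef

variable {n : ℕ} {p : ℝ}

lemma exists_ne_zero_of_pNorm_eq_one (hp : p ≠ 0) {v : Fin n → ℝ} (hv : pNorm p v = 1) :
    ∃ i, v i ≠ 0 := by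
  by_contra! hzero
  simp [pNorm, hzero, Real.zero_rpow hp, Real.zero_rpow (inv_ne_zero hp)] at hv

lemma PPosDef.of_sum_abs_rpow_mul_le (hp : p ≠ 0) {Q : Matrix (Fin n) (Fin n) ℝ} {d : Fin n → ℝ}
    (hd : ∀ i, 0 < d i)
    (hle : ∀ v : Fin n → ℝ, ∑ i, |v i| ^ p * d i ≤ v ⬝ᵥ Q.mulVec (signedPow (p - 1) v)) :
    PPosDef p Q := by
  intro v hv
  obtain ⟨i, hi⟩ := exists_ne_zero_of_pNorm_eq_one hp hv
  have hpos : 0 < ∑ i, |v i| ^ p * d i :=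
    Finset.sum_pos' (fun j _ => mul_nonneg (by positivity) (hd j).le)
      ⟨i, Finset.mem_univ i, mul_pos (by positivity) (hd i)⟩
  exact hpos.trans_le (hle v)

lemma dotProduct_mulVec_signedPow (hp : p ≠ 0) (Q : Matrix (Fin n) (Fin n) ℝ) (v : Fin n → ℝ) :
    v ⬝ᵥ Q.mulVec (signedPow (p - 1) v) =
      ∑ i, (|v i| ^ p * Q i i +
        ∑ j ∈ univ.erase i, v i * (Q i j * (Real.sign (v j) * |v j| ^ (p - 1)))) := by
  simp only [dotProduct, Matrix.mulVec, signedPow, Finset.mul_sum]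
  refine Finset.sum_congr rfl fun i _ => ?_
  rw [← Finset.add_sum_erase _ _ (Finset.mem_univ i), mul_left_comm,
    self_mul_sign_mul_abs_rpow_sub_one hp, mul_comm (Q i i)]

lemma sum_abs_rpow_mul_le_dotProduct_mulVec_signedPow (hp : 1 ≤ p)
    (Q : Matrix (Fin n) (Fin n) ℝ) (v : Fin n → ℝ) :
    ∑ i, |v i| ^ p *
        (Q i i - (p⁻¹ * deletedRowSum Q i + (1 - p⁻¹) * deletedRowSum Qᵀ i)) ≤
      v ⬝ᵥ Q.mulVec (signedPow (p - 1) v) := by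
  rw [dotProduct_mulVec_signedPow (by positivity)]
  simp only [mul_sub, Finset.sum_sub_distrib]
  rw [← sum_offDiag_abs_mul_add, Finset.sum_add_distrib, sub_eq_add_neg]
  simp only [← Finset.sum_neg_distrib]
  gcongr
  exact neg_abs_mul_young_le_mul_sign_mul_rpow hp _ _ _

theorem diag_dominant_pPD_general (hp : 1 ≤ p) (Q : Matrix (Fin n) (Fin n) ℝ) :
    (∀ v : Fin n → ℝ,
      ∑ i, |v i| ^ p *
          (Q i i - (p⁻¹ * deletedRowSum Q i + (1 - p⁻¹) * deletedRowSum Qᵀ i)) ≤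
        v ⬝ᵥ Q.mulVec (signedPow (p - 1) v)) ∧
    ((∀ i, 0 < Q i i - (p⁻¹ * deletedRowSum Q i + (1 - p⁻¹) * deletedRowSum Qᵀ i)) →
      PPosDef p Q) :=
  have hle := sum_abs_rpow_mul_le_dotProduct_mulVec_signedPow hp Q
  ⟨hle, fun hdom => .of_sum_abs_rpow_mul_le (by positivity) hdom hle⟩

end PPosDef

/-- for `p ∈ [1,2]` and symmetric `Q`,
`v⊤ Q v^{⟨p−1⟩} ≥ Σ_i |v_i|^p (q_{ii} − Σ_{j≠i}|q_{ij}|)`; in particular a diagonally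
dominant matrix with non-negative diagonal is `p`-positive definite. -/
theorem diag_dominant_pPD {n : ℕ} (p : ℝ) (hp : p ∈ Set.Icc (1 : ℝ) 2)
    (Q : Matrix (Fin n) (Fin n) ℝ) (hQ : Q.IsSymm) :
    (∀ v : Fin n → ℝ,
      (∑ i, |v i| ^ p * (Q i i - ∑ j ∈ Finset.univ.erase i, |Q i j|)) ≤
        v ⬝ᵥ Q.mulVec (signedPow (p - 1) v)) ∧
    ((∀ i, 0 < Q i i - ∑ j ∈ Finset.univ.erase i, |Q i j|) → PPosDef p Q) := by
  simpa only [hQ.eq, ← add_mul, add_sub_cancel, one_mul, deletedRowSum]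
    using diag_dominant_pPD_general hp.1 Q
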